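/- Let D be an integer with D > 48³ + 3 and σ, R > 0 with R² > σ²(D−3); set s⋆ = √(R² − σ²(D−3)) and suppose 96 log(6) · σ² D^{2/3} ≤ s⋆² ≤ 3σ²D. Let Δₛ = (1/12) σ (D−3)^{1/6} and let g(s) = −h'(s) = (1/Γ((D−1)/2)) · (s/σ²) · ((R²−s²)/(2σ²))^{(D−3)/2} · e^{−(R²−s²)/(2σ²)} for 0 < s < R. Then g is nondecreasing on (0, s⋆ − Δₛ] and nonincreasing on [s⋆ + Δₛ, R). -/

import Mathlib

/-- The negative derivative `-h'(s)` of
`h(s) = P[χ²_{D-1} ≤ (R² - s²)/σ²]`, valid for `0 < s < R`. -/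
noncomputable def negDH (D : ℕ) (σ R : ℝ) (s : ℝ) : ℝ :=
  (1 / Real.Gamma (((D : ℝ) - 1) / 2)) * (s / σ ^ 2) *
    ((R ^ 2 - s ^ 2) / (2 * σ ^ 2)) ^ (((D : ℝ) - 3) / 2) *
    Real.exp (-((R ^ 2 - s ^ 2) / (2 * σ ^ 2)))

/-!
Put `n = D - 3` and differentiate `log (-h')` with respect to `s² / 2` rather than `s`; the result
is `1 / s² + 1 / σ² - n / (R² - s²)`. As `R² = s⋆² + σ² n`, the last two terms cancel at `s = s⋆`
and have a nonnegative sum for `s ≤ s⋆`. Beyond `s⋆`, put `w = s² - s⋆²`; then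
`n / (R² - s²) = n / (σ² n - w) ≥ 1 / σ² + w / (σ⁴ n)`, which outweighs `1 / s² + 1 / σ²` as soon as
`σ⁴ n ≤ w s²`. For `s ≥ s⋆ + δ` one has `w s² ≥ 2 s⋆³ δ`, so that a gap `δ` with
`σ⁴ n ≤ 2 s⋆³ δ` is enough; for `δ = Δₛ` this holds as soon as `s⋆ ≥ 2 σ n^(1/3)`.
-/

open Set

/-- The derivative of `log (-h')` with respect to `s² / 2`, for `0 < s < |R|`. Its sign decides
where `-h'` increases. -/
noncomputable def logSlope (D : ℕ) (σ R s : ℝ) : ℝ :=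
  1 / s ^ 2 + 1 / σ ^ 2 - ((D : ℝ) - 3) / (R ^ 2 - s ^ 2)

section LogSlope

variable {D : ℕ} {σ R s : ℝ}

lemma logSlope_nonneg (hD : 3 ≤ D) (hσ : σ ≠ 0) (hs : s ^ 2 ≤ R ^ 2 - σ ^ 2 * ((D : ℝ) - 3)) :
    0 ≤ logSlope D σ R s := by
  have hn : (0 : ℝ) ≤ (D : ℝ) - 3 := sub_nonneg.2 (by exact_mod_cast hD)
  have hden : σ ^ 2 * ((D : ℝ) - 3) ≤ R ^ 2 - s ^ 2 := by linarith
  have hquot : ((D : ℝ) - 3) / (R ^ 2 - s ^ 2) ≤ 1 / σ ^ 2 := by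
    refine div_le_of_le_mul₀ (le_trans (by positivity) hden) (by positivity) ?_
    rwa [one_div_mul_eq_div, le_div_iff₀' (by positivity)]
  have hsq : 0 ≤ 1 / s ^ 2 := by positivity
  unfold logSlope
  linarith

lemma logSlope_nonpos (hD : 3 ≤ D) (hσ : σ ≠ 0) (hs : s ≠ 0) (hsR : s ^ 2 < R ^ 2)
    (hgap : σ ^ 4 * ((D : ℝ) - 3) ≤ (s ^ 2 - (R ^ 2 - σ ^ 2 * ((D : ℝ) - 3))) * s ^ 2) :
    logSlope D σ R s ≤ 0 := by
  have hn : (0 : ℝ) ≤ (D : ℝ) - 3 := sub_nonneg.2 (by exact_mod_cast hD)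
  have hs2 : 0 < s ^ 2 := by positivity
  have hw : 0 ≤ s ^ 2 - (R ^ 2 - σ ^ 2 * ((D : ℝ) - 3)) :=
    nonneg_of_mul_nonneg_left (le_trans (by positivity) hgap) hs2
  have hσw := mul_nonneg (sq_nonneg σ) hw
  rw [logSlope, sub_nonpos, div_add_div _ _ hs2.ne' (by positivity),
    div_le_div_iff₀ (by positivity) (sub_pos.2 hsR)]
  linarith

end LogSlope

section Monotonicity

variable {D : ℕ} {σ R s : ℝ}

lemma negDH_pos (hD : 1 < D) (hσ : σ ≠ 0) (hs : 0 < s) (hsR : s ^ 2 < R ^ 2) :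
    0 < negDH D σ R s := by
  have hΓ : 0 < Real.Gamma (((D : ℝ) - 1) / 2) :=
    Real.Gamma_pos_of_pos (half_pos (sub_pos.2 (by exact_mod_cast hD)))
  have hdiff : 0 < R ^ 2 - s ^ 2 := sub_pos.2 hsR
  exact mul_pos (mul_pos (mul_pos (one_div_pos.2 hΓ) (by positivity))
    (Real.rpow_pos_of_pos (div_pos hdiff (by positivity)) _)) (Real.exp_pos _)

lemma hasDerivAt_negDH (hσ : σ ≠ 0) (hs : s ≠ 0) (hsR : s ^ 2 < R ^ 2) :
    HasDerivAt (negDH D σ R) (s * negDH D σ R s * logSlope D σ R s) s := by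
  have hdiff : R ^ 2 - s ^ 2 ≠ 0 := (sub_pos.2 hsR).ne'
  have hx : (R ^ 2 - s ^ 2) / (2 * σ ^ 2) ≠ 0 := div_ne_zero hdiff (by positivity)
  have hquad : HasDerivAt (fun u : ℝ => (R ^ 2 - u ^ 2) / (2 * σ ^ 2)) (-(s / σ ^ 2)) s :=
    (((hasDerivAt_pow 2 s).const_sub (R ^ 2)).div_const (2 * σ ^ 2)).congr_deriv
      (by field_simp; norm_num)
  have hpow := hquad.rpow_const (p := ((D : ℝ) - 3) / 2) (Or.inl hx)
  have hlin := ((hasDerivAt_id s).div_const (σ ^ 2)).const_mul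
    (1 / Real.Gamma (((D : ℝ) - 1) / 2))
  refine ((hlin.mul hpow).mul hquad.neg.exp).congr_deriv ?_
  rw [Real.rpow_sub_one hx]
  simp only [negDH, logSlope, id, Pi.mul_apply, Pi.neg_apply]
  generalize ((R ^ 2 - s ^ 2) / (2 * σ ^ 2)) ^ (((D : ℝ) - 3) / 2) = power
  generalize Real.exp (-((R ^ 2 - s ^ 2) / (2 * σ ^ 2))) = expo
  field_simp
  ring

variable {S : Set ℝ}

lemma monotoneOn_negDH (hD : 1 < D) (hσ : σ ≠ 0) (hS : Convex ℝ S)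
    (hdom : ∀ s ∈ S, 0 < s ∧ s ^ 2 < R ^ 2) (hslope : ∀ s ∈ S, 0 ≤ logSlope D σ R s) :
    MonotoneOn (negDH D σ R) S := by
  have hderiv : ∀ s ∈ S, HasDerivAt (negDH D σ R) (s * negDH D σ R s * logSlope D σ R s) s :=
    fun s hs => hasDerivAt_negDH hσ (hdom s hs).1.ne' (hdom s hs).2
  refine monotoneOn_of_hasDerivWithinAt_nonneg hS (HasDerivAt.continuousOn hderiv)
    (fun s hs => (hderiv s (interior_subset hs)).hasDerivWithinAt) fun s hs => ?_
  obtain ⟨hs0, hsR⟩ := hdom s (interior_subset hs)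
  exact mul_nonneg (mul_pos hs0 (negDH_pos hD hσ hs0 hsR)).le (hslope s (interior_subset hs))

lemma antitoneOn_negDH (hD : 1 < D) (hσ : σ ≠ 0) (hS : Convex ℝ S)
    (hdom : ∀ s ∈ S, 0 < s ∧ s ^ 2 < R ^ 2) (hslope : ∀ s ∈ S, logSlope D σ R s ≤ 0) :
    AntitoneOn (negDH D σ R) S := by
  have hderiv : ∀ s ∈ S, HasDerivAt (negDH D σ R) (s * negDH D σ R s * logSlope D σ R s) s :=
    fun s hs => hasDerivAt_negDH hσ (hdom s hs).1.ne' (hdom s hs).2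
  refine antitoneOn_of_hasDerivWithinAt_nonpos hS (HasDerivAt.continuousOn hderiv)
    (fun s hs => (hderiv s (interior_subset hs)).hasDerivWithinAt) fun s hs => ?_
  obtain ⟨hs0, hsR⟩ := hdom s (interior_subset hs)
  exact mul_nonpos_of_nonneg_of_nonpos (mul_pos hs0 (negDH_pos hD hσ hs0 hsR)).le
    (hslope s (interior_subset hs))

end Monotonicity

section Gap

variable {d n s t δ σ : ℝ}

lemma two_mul_pow_three_mul_le (ht : 0 ≤ t) (hδ : 0 ≤ δ) (hs : t + δ ≤ s) :
    2 * t ^ 3 * δ ≤ (s ^ 2 - t ^ 2) * s ^ 2 := by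
  have hgap : 2 * t * δ ≤ s ^ 2 - t ^ 2 := by
    have hsq : (t + δ) ^ 2 ≤ s ^ 2 := by gcongr
    linarith [sq_nonneg δ]
  have htδ : 0 ≤ 2 * t * δ := by positivity
  calc 2 * t ^ 3 * δ = 2 * t * δ * t ^ 2 := by ring
    _ ≤ (s ^ 2 - t ^ 2) * s ^ 2 :=
        mul_le_mul hgap (by linarith) (sq_nonneg t) (htδ.trans hgap)

lemma two_mul_rpow_one_third_le (hd : 3 ≤ d) (ht : 0 ≤ t)
    (hlow : 96 * Real.log 6 * σ ^ 2 * d ^ ((2 : ℝ) / 3) ≤ t ^ 2) :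
    2 * σ * (d - 3) ^ ((1 : ℝ) / 3) ≤ t := by
  have hlog : 4 ≤ 96 * Real.log 6 := by
    linarith [Real.one_sub_inv_le_log_of_pos (show (0 : ℝ) < 6 by norm_num)]
  have hsq : ((d - 3) ^ ((1 : ℝ) / 3)) ^ 2 = (d - 3) ^ ((2 : ℝ) / 3) := by
    rw [← Real.rpow_mul_natCast (by linarith)]
    norm_num
  refine le_of_sq_le_sq ?_ ht
  calc (2 * σ * (d - 3) ^ ((1 : ℝ) / 3)) ^ 2 = 4 * σ ^ 2 * (d - 3) ^ ((2 : ℝ) / 3) := by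
        rw [mul_pow, hsq]
        ring
    _ ≤ 96 * Real.log 6 * σ ^ 2 * d ^ ((2 : ℝ) / 3) := by
        gcongr
        linarith
    _ ≤ t ^ 2 := hlow

lemma pow_four_mul_le_two_mul_pow_three_mul (hn : 1 ≤ n) (hσ : 0 ≤ σ)
    (ht : 2 * σ * n ^ ((1 : ℝ) / 3) ≤ t) :
    σ ^ 4 * n ≤ 2 * t ^ 3 * (1 / 12 * σ * n ^ ((1 : ℝ) / 6)) := by
  have hcube : (n ^ ((1 : ℝ) / 3)) ^ 3 = n := by
    rw [← Real.rpow_mul_natCast (by linarith)]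
    norm_num
  have hroot : 1 ≤ n ^ ((1 : ℝ) / 6) := Real.one_le_rpow hn (by norm_num)
  have hσn : 0 ≤ σ ^ 4 * n := by positivity
  have ht0 : 0 ≤ t := le_trans (by positivity) ht
  calc σ ^ 4 * n ≤ 4 / 3 * (σ ^ 4 * n) := by linarith
    _ = 2 * (2 * σ * n ^ ((1 : ℝ) / 3)) ^ 3 * (1 / 12 * σ * 1) := by
        rw [mul_pow, hcube]
        ring
    _ ≤ 2 * t ^ 3 * (1 / 12 * σ * n ^ ((1 : ℝ) / 6)) := by gcongr

end Gap

theorem neg_h_deriv_monotone_general (D : ℕ) (hD : 3 < D) (σ R : ℝ) (hσ : σ ≠ 0)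
    (sstar : ℝ) (hsstar : sstar = Real.sqrt (R ^ 2 - σ ^ 2 * ((D : ℝ) - 3)))
    (δ : ℝ) (hδ : σ ^ 4 * ((D : ℝ) - 3) ≤ 2 * sstar ^ 3 * δ) :
    MonotoneOn (negDH D σ R) (Ioc 0 sstar) ∧
    AntitoneOn (negDH D σ R) (Ico (sstar + δ) R) := by
  have hn : (0 : ℝ) < (D : ℝ) - 3 := sub_pos.2 (by exact_mod_cast hD)
  have hnonneg : 0 ≤ sstar := hsstar ▸ Real.sqrt_nonneg _
  have hprod : 0 < 2 * sstar ^ 3 * δ := lt_of_lt_of_le (by positivity) hδ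
  have hδ0 : 0 < δ := pos_of_mul_pos_right hprod (by positivity)
  have hpos : 0 < sstar := hnonneg.lt_of_ne fun h => by simp [← h] at hprod
  have hsq : sstar ^ 2 = R ^ 2 - σ ^ 2 * ((D : ℝ) - 3) := by
    rw [hsstar, Real.sq_sqrt (Real.sqrt_pos.1 (hsstar ▸ hpos)).le]
  have hlt : sstar ^ 2 < R ^ 2 := hsq ▸ sub_lt_self _ (by positivity)
  constructor
  · have hle : ∀ s ∈ Ioc 0 sstar, s ^ 2 ≤ sstar ^ 2 := fun s hs =>
      pow_le_pow_left₀ hs.1.le hs.2 2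
    exact monotoneOn_negDH (by lia) hσ (convex_Ioc _ _)
      (fun s hs => ⟨hs.1, (hle s hs).trans_lt hlt⟩)
      fun s hs => logSlope_nonneg hD.le hσ (hsq ▸ hle s hs)
  · have hdom : ∀ s ∈ Ico (sstar + δ) R, 0 < s ∧ s ^ 2 < R ^ 2 := fun s hs =>
      have hs0 : 0 < s := by linarith [hs.1]
      ⟨hs0, pow_lt_pow_left₀ hs.2 hs0.le two_ne_zero⟩
    refine antitoneOn_negDH (by lia) hσ (convex_Ico _ _) hdom fun s hs => ?_
    obtain ⟨hs0, hsR⟩ := hdom s hs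
    refine logSlope_nonpos hD.le hσ hs0.ne' hsR (hδ.trans ?_)
    exact hsq ▸ two_mul_pow_three_mul_le hpos.le hδ0.le hs.1

/-- **Monotonicity of `-h'` outside the region of phase transition.**  With
`s⋆ = √(R² - σ²(D-3))` and `Δₛ = (1/12)σ(D-3)^(1/6)`, if `D > 48³ + 3` and
`96 log 6 · σ² D^(2/3) ≤ s⋆² ≤ 3σ²D`, then `-h'` is nondecreasing on
`(0, s⋆ - Δₛ]` and nonincreasing on `[s⋆ + Δₛ, R)`. -/
theorem neg_h_deriv_monotone (D : ℕ) (hD : 48 ^ 3 + 3 < D) (σ R : ℝ)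
    (hσ : 0 < σ) (hR : 0 < R) (hRD : σ ^ 2 * ((D : ℝ) - 3) < R ^ 2)
    (sstar : ℝ) (hsstar : sstar = Real.sqrt (R ^ 2 - σ ^ 2 * ((D : ℝ) - 3)))
    (hlow : 96 * Real.log 6 * σ ^ 2 * (D : ℝ) ^ ((2 : ℝ) / 3) ≤ sstar ^ 2)
    (hhigh : sstar ^ 2 ≤ 3 * σ ^ 2 * D) :
    MonotoneOn (negDH D σ R)
        (Set.Ioc 0 (sstar - (1 / 12) * σ * ((D : ℝ) - 3) ^ ((1 : ℝ) / 6))) ∧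
    AntitoneOn (negDH D σ R)
        (Set.Ico (sstar + (1 / 12) * σ * ((D : ℝ) - 3) ^ ((1 : ℝ) / 6)) R) := by
  have hn : (1 : ℝ) ≤ (D : ℝ) - 3 := by
    have : (4 : ℝ) ≤ D := by exact_mod_cast (by lia : 4 ≤ D)
    linarith
  have hcubeRoot : 2 * σ * ((D : ℝ) - 3) ^ ((1 : ℝ) / 3) ≤ sstar :=
    two_mul_rpow_one_third_le (by linarith) (hsstar ▸ Real.sqrt_nonneg _) hlow
  obtain ⟨hmono, hanti⟩ := neg_h_deriv_monotone_general D (by lia) σ R hσ.ne' sstar hsstar _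
    (pow_four_mul_le_two_mul_pow_three_mul hn hσ.le hcubeRoot)
  exact ⟨hmono.mono (Ioc_subset_Ioc_right (sub_le_self _ (by positivity))), hanti⟩
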